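/- Let d ≥ 3 and Q = [0, h]^d ⊂ ℝ^d a cube of side length h, with center x_Q. Let x₁ ∈ ℝ^d with dist(x₁, Q) ≥ h. Then |∫_Q ‖x₁ - y‖^{2-d} dy − h^d ‖x₁ − x_Q‖^{2-d}| ≤ C_d · h^{d+2} · dist(x₁, Q)^{-d}, i.e. the midpoint rule for the Coulomb kernel over a cube has error of second order, with the linear term cancelling by symmetry. -/

import Mathlib

open Real MeasureTheory Metric

/-- Tangent line inequality for `r ↦ r ^ (-q)`. -/
lemma tangent_aux {q r s : ℝ} (hq : 0 ≤ q) (hr : 0 < r) (hs : 0 < s) :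
    s ^ (-q) - q * s ^ (-q - 1) * (r - s) ≤ r ^ (-q) := by
  have hz : 0 < r / s := div_pos hr hs
  have h1 : 1 - q * (r / s - 1) ≤ (r / s) ^ (-q) := by
    rw [Real.rpow_def_of_pos hz]
    have h2 := Real.add_one_le_exp (Real.log (r / s) * -q)
    have h3 := Real.log_le_sub_one_of_pos hz
    nlinarith
  have h4 : r ^ (-q) = s ^ (-q) * (r / s) ^ (-q) := by
    rw [← Real.mul_rpow hs.le hz.le]
    congr 1
    field_simp
  have h5 : s ^ (-q - 1) = s ^ (-q) / s := Real.rpow_sub_one hs.ne' _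
  rw [h4, h5]
  have h6 : s ^ (-q) - q * (s ^ (-q) / s) * (r - s) = s ^ (-q) * (1 - q * (r / s - 1)) := by
    field_simp
  rw [h6]
  exact mul_le_mul_of_nonneg_left h1 (Real.rpow_nonneg hs.le _)

/-- Second order Taylor bound for `r ↦ r ^ (-p)`. -/
lemma taylor_aux {p r s m : ℝ} (hp : 0 ≤ p) (hm : 0 < m) (hr : m ≤ r) (hs : m ≤ s) :
    |r ^ (-p) - s ^ (-p) + p * s ^ (-p - 1) * (r - s)|
      ≤ p * (p + 1) * m ^ (-p - 2) * (r - s) ^ 2 := by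
  have hr0 := hm.trans_le hr
  have hs0 := hm.trans_le hs
  have a1 := tangent_aux hp hr0 hs0
  have a2 := tangent_aux hp hs0 hr0
  have hp1 : 0 ≤ p + 1 := by linarith
  have e1 : -(p + 1) = -p - 1 := by ring
  have e2 : -p - 1 - 1 = -p - 2 := by ring
  have key : (s ^ (-p - 1) - r ^ (-p - 1)) * (r - s) ≤ (p + 1) * m ^ (-p - 2) * (r - s) ^ 2 := by
    have b1 := tangent_aux hp1 hr0 hs0
    have b2 := tangent_aux hp1 hs0 hr0
    rw [e1, e2] at b1 b2
    have c1 : s ^ (-p - 2) ≤ m ^ (-p - 2) := Real.rpow_le_rpow_of_nonpos hm hs (by linarith)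
    have c2 : r ^ (-p - 2) ≤ m ^ (-p - 2) := Real.rpow_le_rpow_of_nonpos hm hr (by linarith)
    have c1' := mul_le_mul_of_nonneg_left c1 (mul_nonneg hp1 (sq_nonneg (r - s)))
    have c2' := mul_le_mul_of_nonneg_left c2 (mul_nonneg hp1 (sq_nonneg (r - s)))
    rcases le_total s r with h | h
    · have := mul_le_mul_of_nonneg_right b1 (sub_nonneg.2 h)
      nlinarith
    · have := mul_le_mul_of_nonneg_right b2 (sub_nonneg.2 h)
      nlinarith
  have key' := mul_le_mul_of_nonneg_left key hp
  rw [abs_of_nonneg (by linarith)]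
  nlinarith

set_option maxHeartbeats 1000000 in
/-- Pointwise bound for the symmetrized second difference. -/
lemma pointwise_aux {E : Type*} [NormedAddCommGroup E] [InnerProductSpace ℝ E]
    (d : ℕ) (hd : 3 ≤ d) (a v : E) (h D : ℝ) (hh : 0 < h) (hD : h ≤ D)
    (h0 : D ≤ ‖a‖) (h1 : D ≤ ‖a + v‖) (h2 : D ≤ ‖a - v‖)
    (hv : ‖v‖ ^ 2 ≤ d * h ^ 2) (ha : ‖a‖ ≤ (1 + d) * D) :
    |‖a + v‖ ^ ((2 : ℝ) - d) + ‖a - v‖ ^ ((2 : ℝ) - d) - 2 * ‖a‖ ^ ((2 : ℝ) - d)|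
      ≤ ((2 * d * (((d : ℝ) - 2) / 2)
          + (((d : ℝ) - 2) / 2) * (((d : ℝ) - 2) / 2 + 1) * (2 * d ^ 2 + 8 * (1 + d) ^ 2 * d)))
        * h ^ 2 * D ^ (-(d : ℝ)) := by
  have hd' : (3 : ℝ) ≤ d := by exact_mod_cast hd
  have hD0 : 0 < D := hh.trans_le hD
  set p : ℝ := ((d : ℝ) - 2) / 2 with hpdef
  have hp : 0 ≤ p := by rw [hpdef]; linarith
  have conv : ∀ w : E, ‖w‖ ^ ((2 : ℝ) - d) = (‖w‖ ^ 2) ^ (-p) := by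
    intro w
    rw [← Real.rpow_natCast_mul (norm_nonneg w)]
    congr 1
    rw [hpdef]; push_cast; ring
  have hm : 0 < D ^ 2 := by positivity
  have sq : ∀ w : E, D ≤ ‖w‖ → D ^ 2 ≤ ‖w‖ ^ 2 := fun w hw => pow_le_pow_left₀ hD0.le hw 2
  have t1 := taylor_aux hp hm (sq _ h1) (sq _ h0)
  have t2 := taylor_aux hp hm (sq _ h2) (sq _ h0)
  have n1 := norm_add_sq_real a v
  have n2 := norm_sub_sq_real a v
  have hin := abs_real_inner_le_norm a v
  rw [conv, conv, conv]
  have m1 : (D ^ 2) ^ (-p - 1) = D ^ (-(d : ℝ)) := by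
    rw [← Real.rpow_natCast_mul hD0.le]
    congr 1
    rw [hpdef]; push_cast; ring
  have m2 : (D ^ 2) ^ (-p - 2) * D ^ 2 = D ^ (-(d : ℝ)) := by
    rw [← m1, ← Real.rpow_add_one hm.ne']
    congr 1
    ring
  have hs1 : (‖a‖ ^ 2) ^ (-p - 1) ≤ D ^ (-(d : ℝ)) := by
    rw [← m1]
    exact Real.rpow_le_rpow_of_nonpos hm (sq _ h0) (by linarith)
  have hs0 : 0 ≤ (‖a‖ ^ 2) ^ (-p - 1) := by positivity
  have hM0 : 0 ≤ (D ^ 2) ^ (-p - 2) := by positivity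
  have hN0 : 0 ≤ D ^ (-(d : ℝ)) := by positivity
  have e1 : ‖a + v‖ ^ 2 - ‖a‖ ^ 2 = ‖v‖ ^ 2 + 2 * inner ℝ a v := by linarith
  have e2 : ‖a - v‖ ^ 2 - ‖a‖ ^ 2 = ‖v‖ ^ 2 - 2 * inner ℝ a v := by linarith
  rw [e1] at t1
  rw [e2] at t2
  have hin2 : (inner ℝ a v) ^ 2 ≤ ‖a‖ ^ 2 * ‖v‖ ^ 2 := by
    rw [← mul_pow, ← sq_abs (inner ℝ a v)]
    exact pow_le_pow_left₀ (abs_nonneg _) hin 2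
  have ha2 : ‖a‖ ^ 2 ≤ (1 + d) ^ 2 * D ^ 2 := by
    rw [← mul_pow]; exact pow_le_pow_left₀ (norm_nonneg _) ha 2
  have hhD : h ^ 2 ≤ D ^ 2 := pow_le_pow_left₀ hh.le hD 2
  have hin3 : (inner ℝ a v) ^ 2 ≤ ((1 + d) ^ 2 * D ^ 2) * (d * h ^ 2) :=
    hin2.trans (mul_le_mul ha2 hv (by positivity) (by positivity))
  have hvv : (‖v‖ ^ 2) ^ 2 ≤ (d * h ^ 2) * (d * D ^ 2) := by
    rw [pow_two (‖v‖ ^ 2)]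
    refine mul_le_mul hv (hv.trans ?_) (by positivity) (by positivity)
    exact mul_le_mul_of_nonneg_left hhD (by positivity)
  have q1 : (‖v‖ ^ 2 + 2 * inner ℝ a v) ^ 2 + (‖v‖ ^ 2 - 2 * inner ℝ a v) ^ 2
      ≤ (2 * d ^ 2 + 8 * (1 + d) ^ 2 * d) * h ^ 2 * D ^ 2 := by
    linarith
  have q2 : p * (p + 1) * (D ^ 2) ^ (-p - 2) *
      ((‖v‖ ^ 2 + 2 * inner ℝ a v) ^ 2 + (‖v‖ ^ 2 - 2 * inner ℝ a v) ^ 2)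
      ≤ p * (p + 1) * (2 * d ^ 2 + 8 * (1 + d) ^ 2 * d) * h ^ 2 * D ^ (-(d : ℝ)) := by
    refine (mul_le_mul_of_nonneg_left q1 (by positivity)).trans (le_of_eq ?_)
    rw [← m2]; ring
  have q3 : p * (‖a‖ ^ 2) ^ (-p - 1) * ‖v‖ ^ 2 ≤ p * D ^ (-(d : ℝ)) * (d * h ^ 2) := by
    gcongr
  have q4 : 0 ≤ p * (‖a‖ ^ 2) ^ (-p - 1) * ‖v‖ ^ 2 := by positivity
  obtain ⟨t11, t12⟩ := abs_le.1 t1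
  obtain ⟨t21, t22⟩ := abs_le.1 t2
  clear t1 t2 n1 n2 conv e1 e2
  refine abs_le.2 ⟨?_, ?_⟩
  · linarith
  · linarith

/-- Midpoint rule for the Coulomb kernel over a cube: for `d ≥ 3`, `Q = [0,h]^d` with
center `x_Q`, and `x₁` at distance at least `h` from `Q`,
`|∫_Q ‖x₁ - y‖^{2-d} dy − h^d ‖x₁ − x_Q‖^{2-d}| ≤ C_d h^{d+2} dist(x₁,Q)^{-d}`. -/
theorem stmt12 (d : ℕ) (hd : 3 ≤ d) :
    ∃ C : ℝ, 0 < C ∧ ∀ h : ℝ, 0 < h →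
      ∀ Q : Set (EuclideanSpace ℝ (Fin d)), Q = {y | ∀ i, y i ∈ Set.Icc 0 h} →
      ∀ xQ : EuclideanSpace ℝ (Fin d), (∀ i, xQ i = h / 2) →
      ∀ x₁ : EuclideanSpace ℝ (Fin d), h ≤ Metric.infDist x₁ Q →
      |(∫ y in Q, ‖x₁ - y‖ ^ ((2 : ℝ) - d)) - h ^ d * ‖x₁ - xQ‖ ^ ((2 : ℝ) - d)|
        ≤ C * h ^ (d + 2) * Metric.infDist x₁ Q ^ (-(d : ℝ)) := by
  have hd' : (3 : ℝ) ≤ d := by exact_mod_cast hd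
  have hp : 0 < ((d : ℝ) - 2) / 2 := by linarith
  refine ⟨(2 * d * (((d : ℝ) - 2) / 2)
          + (((d : ℝ) - 2) / 2) * (((d : ℝ) - 2) / 2 + 1) * (2 * d ^ 2 + 8 * (1 + d) ^ 2 * d)),
          by positivity, ?_⟩
  set C := (2 * d * (((d : ℝ) - 2) / 2)
          + (((d : ℝ) - 2) / 2) * (((d : ℝ) - 2) / 2 + 1) * (2 * d ^ 2 + 8 * (1 + d) ^ 2 * d))
    with hC
  intro h hh Q hQ xQ hxQ x₁ hdist
  set D := Metric.infDist x₁ Q with hDdef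
  have hD0 : 0 < D := hh.trans_le hdist
  have memQ : ∀ y, y ∈ Q ↔ ∀ i, 0 ≤ y i ∧ y i ≤ h := by
    intro y; rw [hQ]; rfl
  have hpre : Q = (WithLp.ofLp : EuclideanSpace ℝ (Fin d) → (Fin d → ℝ)) ⁻¹'
      (Set.Icc (fun _ => 0) (fun _ => h)) := by
    ext y
    rw [memQ]
    simp only [Set.mem_preimage, Set.mem_Icc, Pi.le_def]
    exact forall_and
  have hxQmem : xQ ∈ Q := by
    rw [memQ]; intro i; rw [hxQ]; constructor <;> linarith
  have hmeas : MeasurableSet Q := by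
    rw [hpre]
    exact (PiLp.volume_preserving_ofLp (Fin d)).measurable measurableSet_Icc
  have hvol : volume Q = ENNReal.ofReal h ^ d := by
    rw [hpre, (PiLp.volume_preserving_ofLp (Fin d)).measure_preimage
      measurableSet_Icc.nullMeasurableSet, Real.volume_Icc_pi]
    simp
  have hfin : volume Q < ⊤ := by rw [hvol]; exact ENNReal.pow_lt_top ENNReal.ofReal_lt_top
  have hreal : volume.real Q = h ^ d := by
    rw [Measure.real, hvol, ENNReal.toReal_pow, ENNReal.toReal_ofReal hh.le]
  have hfar : ∀ y ∈ Q, D ≤ ‖x₁ - y‖ := by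
    intro y hy
    rw [← dist_eq_norm]
    exact Metric.infDist_le_dist_of_mem hy
  have hrefl : ∀ y, (xQ + xQ - y ∈ Q) ↔ y ∈ Q := by
    intro y
    rw [memQ, memQ]
    refine forall_congr' fun i => ?_
    simp only [PiLp.sub_apply, PiLp.add_apply, hxQ]
    constructor <;> rintro ⟨h1, h2⟩ <;> constructor <;> linarith
  have hrad : ∀ y ∈ Q, ‖xQ - y‖ ^ 2 ≤ d * h ^ 2 := by
    intro y hy
    rw [memQ] at hy
    rw [EuclideanSpace.norm_sq_eq]
    have : ∀ i ∈ Finset.univ, ‖(xQ - y) i‖ ^ 2 ≤ h ^ 2 := by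
      intro i _
      rw [Real.norm_eq_abs, sq_abs, PiLp.sub_apply, hxQ]
      have := hy i
      nlinarith
    refine (Finset.sum_le_sum this).trans ?_
    simp
  have hrad' : ∀ y ∈ Q, ‖xQ - y‖ ≤ d * h := by
    intro y hy
    refine (pow_le_pow_iff_left₀ (norm_nonneg _) (by positivity) two_ne_zero).1 ?_
    refine (hrad y hy).trans ?_
    rw [mul_pow]
    gcongr
    nlinarith
  have ha : ‖x₁ - xQ‖ ≤ (1 + d) * D := by
    have : ‖x₁ - xQ‖ - d * h ≤ D := by
      refine (Metric.le_infDist ⟨xQ, hxQmem⟩).2 fun y hy => ?_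
      rw [dist_eq_norm]
      have h1 := hrad' y hy
      have h2 : ‖x₁ - xQ‖ ≤ ‖x₁ - y‖ + ‖xQ - y‖ := by
        have := norm_sub_le (x₁ - y) (xQ - y)
        simpa using this
      linarith
    have : (d : ℝ) * h ≤ d * D := by gcongr
    linarith
  set F : EuclideanSpace ℝ (Fin d) → ℝ := fun y => ‖x₁ - y‖ ^ ((2 : ℝ) - d) with hF
  have hFm : Measurable F := by rw [hF]; fun_prop
  have hFint : IntegrableOn F Q := by
    refine Measure.integrableOn_of_bounded (M := D ^ ((2 : ℝ) - d)) hfin.ne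
      hFm.aestronglyMeasurable ?_
    filter_upwards [ae_restrict_mem hmeas] with y hy
    rw [Real.norm_eq_abs, abs_of_nonneg (by positivity)]
    exact Real.rpow_le_rpow_of_nonpos hD0 (hfar y hy) (by linarith)
  have hmp : MeasurePreserving (fun y : EuclideanSpace ℝ (Fin d) => xQ + xQ - y) volume volume :=
    Measure.measurePreserving_sub_left volume (xQ + xQ)
  have hpreQ : (fun y : EuclideanSpace ℝ (Fin d) => xQ + xQ - y) ⁻¹' Q = Q := by
    ext y; exact hrefl y
  have hemb : MeasurableEmbedding (fun y : EuclideanSpace ℝ (Fin d) => xQ + xQ - y) :=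
    (MeasurableEquiv.subLeft (xQ + xQ)).measurableEmbedding
  have hIeq : ∫ y in Q, F (xQ + xQ - y) = ∫ y in Q, F y := by
    have := hmp.setIntegral_preimage_emb hemb F Q
    rwa [hpreQ] at this
  have hFint' : IntegrableOn (fun y => F (xQ + xQ - y)) Q := by
    have := (hmp.integrableOn_comp_preimage hemb (f := F) (s := Q)).2 hFint
    rwa [hpreQ] at this
  have hconst : IntegrableOn (fun _ : EuclideanSpace ℝ (Fin d) => 2 * F xQ) Q :=
    integrableOn_const hfin.ne
  have hsum : ∫ y in Q, (F y + F (xQ + xQ - y) - 2 * F xQ)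
      = 2 * ((∫ y in Q, F y) - h ^ d * F xQ) := by
    have hadd : IntegrableOn (fun y => F y + F (xQ + xQ - y)) Q := hFint.add hFint'
    rw [integral_sub hadd hconst, integral_add hFint hFint', hIeq,
      setIntegral_const, hreal, smul_eq_mul]
    ring
  have hbd : ‖∫ y in Q, (F y + F (xQ + xQ - y) - 2 * F xQ)‖
      ≤ C * h ^ 2 * D ^ (-(d : ℝ)) * volume.real Q := by
    refine norm_setIntegral_le_of_norm_le_const hfin fun y hy => ?_
    have e1 : x₁ - xQ + (xQ - y) = x₁ - y := by abel
    have e2 : x₁ - xQ - (xQ - y) = x₁ - (xQ + xQ - y) := by abel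
    have := pointwise_aux d hd (x₁ - xQ) (xQ - y) h D hh hdist (hfar _ hxQmem)
      (by rw [e1]; exact hfar y hy) (by rw [e2]; exact hfar _ ((hrefl y).2 hy))
      (hrad y hy) ha
    rw [e1, e2] at this
    exact this
  rw [hsum, hreal, Real.norm_eq_abs, abs_mul, abs_two] at hbd
  have e : C * h ^ (d + 2) * D ^ (-(d : ℝ)) = C * h ^ 2 * D ^ (-(d : ℝ)) * h ^ d := by ring
  rw [e]
  have := abs_nonneg ((∫ y in Q, F y) - h ^ d * F xQ)
  change |(∫ y in Q, F y) - h ^ d * F xQ| ≤ _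
  linarith
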